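/- Let θ be a cylindric diagram in C_ω, let ξ ∈ I_n(θ) be a proper order ideal of cardinality n, and let S be a standard tableau on ξ. Then the expression w_{ξ,S} = s(S⁻¹(1)) s(S⁻¹(2)) ⋯ s(S⁻¹(n)) is a reduced expression (its Coxeter length in W is n), the element of W it defines is fully commutative, and this element does not depend on the choice of the standard tableau S on ξ. -/

import Mathlib

/-!
The element `w` attached to `ξ` is recognised by its action on the level-zero part of `h*`.

Cut the diagram `θ` along the diagonals `b - a = c`: it is determined by the largest `a` with
`π(a, a + c) ∈ θ`, an integer sequence `F` with `F (c + 1) - F c ∈ {0, -1}` and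
`F (c + κ) = F c - m`. Adding the linear term `m c / κ` makes it `κ`-periodic, i.e. a vector
`g = Σ g_i α_i` of `h*` whose consecutive differences take two values `d`, `d - 1`
(`IsProf`, `Steps`). The reflection `s_i` replaces `g_i` by `g_{i-1} + g_{i+1} - g_i`; it preserves
`Steps`, changes `Σ g_i` by at most one, and adds or removes the corner cell of content `i` of the
diagram, if there is one.

If `f` and `g` are the profiles of `θ \ ξ` and `θ`, then the word of any standard tableau on `ξ`
sends `f` to `g` (`tableau_word`), and `Σ g - Σ f = n`; hence no shorter word has the same product.
Conversely, any word of length `n` sending `f` to `g` must raise the sum at every letter (`Good`),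
i.e. it adds the cells of `ξ` one at a time. Two such words are related by commutations
(`good_connected`): a corner `i` of `g` lying outside `f` has to be added by any good word, and every
letter applied after its addition commutes with it since two neighbouring contents are never both
corners (`good_pull`). This gives full commutativity, and also independence of the tableau.
-/


namespace CylPaper

/-! ## The cylinder and its order -/

abbrev Z2 : Type := ℤ × ℤ

/-- The partial order on ℤ²: (a,b) ≤ (c,d) iff a ≥ c and b ≥ d. -/
def le2 (x y : Z2) : Prop := y.1 ≤ x.1 ∧ y.2 ≤ x.2

/-- The period ω = (m, -ℓ). -/
def om (m l : ℕ) : Z2 := ((m : ℤ), -(l : ℤ))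

/-- The cylinder C_ω = ℤ²/ℤω. -/
abbrev Cyl (m l : ℕ) : Type := Z2 ⧸ AddSubgroup.zmultiples (om m l)

/-- The natural projection π : ℤ² → C_ω. -/
def pr (m l : ℕ) : Z2 →+ Cyl m l := QuotientAddGroup.mk' _

/-- The induced order relation on the cylinder: x ≤ y iff there are lifts with x̃ ≤ ỹ. -/
def cle (m l : ℕ) (x y : Cyl m l) : Prop :=
  ∃ a b : Z2, pr m l a = x ∧ pr m l b = y ∧ le2 a b

/-- A cylindric diagram: a non-trivial order filter of C_ω. -/
def IsCylindric (m l : ℕ) (θ : Set (Cyl m l)) : Prop :=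
  θ.Nonempty ∧ θ ≠ Set.univ ∧ ∀ x ∈ θ, ∀ y, cle m l x y → y ∈ θ

/-- A periodic diagram of period ω: a non-trivial order filter of ℤ² with Θ + ω = Θ. -/
def IsPeriodic (m l : ℕ) (Θ : Set Z2) : Prop :=
  Θ.Nonempty ∧ Θ ≠ Set.univ ∧ (∀ x ∈ Θ, ∀ y, le2 x y → y ∈ Θ) ∧
    (fun p => p + om m l) '' Θ = Θ

/-- A proper order ideal ξ of the sub-poset θ of C_ω. -/
def IsProperIdealOf (m l : ℕ) (θ ξ : Set (Cyl m l)) : Prop :=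
  ξ ⊆ θ ∧ ξ ≠ θ ∧ ∀ x ∈ ξ, ∀ y ∈ θ, cle m l y x → y ∈ ξ

/-- A proper order ideal of the whole cylinder C_ω. -/
def IsProperIdealC (m l : ℕ) (J : Set (Cyl m l)) : Prop :=
  J ≠ Set.univ ∧ ∀ x ∈ J, ∀ y, cle m l y x → y ∈ J

/-- A proper order filter of the whole cylinder C_ω. -/
def IsProperFilterC (m l : ℕ) (J : Set (Cyl m l)) : Prop :=
  J ≠ Set.univ ∧ ∀ x ∈ J, ∀ y, cle m l x y → y ∈ J

/-! ## The content map -/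

/-- The content on ℤ²: (a,b) ↦ b - a mod κ (κ = m + ℓ). -/
def conHom (m l : ℕ) : Z2 →+ ZMod (m + l) where
  toFun p := ((p.2 - p.1 : ℤ) : ZMod (m + l))
  map_zero' := by simp
  map_add' a b := by
    simp only [Prod.fst_add, Prod.snd_add]
    push_cast
    ring

lemma conHom_om (m l : ℕ) : conHom m l (om m l) = 0 := by
  have h : ((m + l : ℕ) : ZMod (m + l)) = 0 := ZMod.natCast_self _
  show ((((om m l).2 - (om m l).1 : ℤ)) : ZMod (m + l)) = 0
  simp only [om]
  push_cast at h ⊢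
  linear_combination -h

/-- The content map con : C_ω → ℤ/κℤ. -/
def con (m l : ℕ) : Cyl m l →+ ZMod (m + l) :=
  QuotientAddGroup.lift _ (conHom m l) (by
    intro x hx
    obtain ⟨k, rfl⟩ := AddSubgroup.mem_zmultiples_iff.mp hx
    simp only [AddMonoidHom.mem_ker, map_zsmul, conHom_om, smul_zero])

/-! ## The affine root system of type A_{κ-1}^{(1)} -/

/-- h*, with coordinates in the basis {α_i (i ∈ ℤ/κℤ), Λ₀}:
`(c, t)` stands for `Σ_i c_i α_i + t Λ₀`. -/
abbrev Hw (κ : ℕ) : Type := (ZMod κ → ℚ) × ℚ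

/-- The affine Cartan matrix of type A_{κ-1}^{(1)} (valid for κ ≥ 2). -/
def cartan (κ : ℕ) (i j : ZMod κ) : ℚ :=
  (if i = j then 2 else 0) + (if i - j = 1 then -1 else 0) + (if i - j = -1 then -1 else 0)

/-- The simple root α_i. -/
def alphaR (κ : ℕ) (i : ZMod κ) : Hw κ := (Pi.single i 1, 0)

/-- The null root δ = Σ_i α_i. -/
def deltaR (κ : ℕ) : Hw κ := (fun _ => 1, 0)

/-- The pairing ⟨ζ, α_i^∨⟩. -/
noncomputable def pairSimple (κ : ℕ) (ζ : Hw κ) (i : ZMod κ) : ℚ :=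
  (∑ᶠ j, ζ.1 j * cartan κ i j) + ζ.2 * (if i = 0 then 1 else 0)

/-- The pairing ⟨ζ, β^∨⟩ where β = Σ_i k_i α_i lies in the root lattice,
so β^∨ = Σ_i k_i α_i^∨. -/
noncomputable def pairCo (κ : ℕ) (ζ β : Hw κ) : ℚ := ∑ᶠ i, β.1 i * pairSimple κ ζ i

/-- The simple reflection s_i : ζ ↦ ζ - ⟨ζ, α_i^∨⟩ α_i, as a map on h*. -/
noncomputable def sFun (κ : ℕ) (i : ZMod κ) (ζ : Hw κ) : Hw κ :=
  ζ - pairSimple κ ζ i • alphaR κ i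

/-- The element s_{i₁} s_{i₂} ⋯ s_{i_r} of the affine Weyl group
given by a word [i₁, i₂, …, i_r]. -/
noncomputable def wordProd (κ : ℕ) (L : List (ZMod κ)) : Hw κ → Hw κ :=
  (L.map (sFun κ)).foldr (· ∘ ·) id

/-- Membership in the affine Weyl group W (generated by the s_i). -/
def Wmem (κ : ℕ) (w : Hw κ → Hw κ) : Prop := ∃ L : List (ZMod κ), wordProd κ L = w

/-- The Coxeter length: the least r such that w is a product of r simple reflections. -/
noncomputable def len (κ : ℕ) (w : Hw κ → Hw κ) : ℕ :=
  sInf {r : ℕ | ∃ L : List (ZMod κ), L.length = r ∧ wordProd κ L = w}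

/-- Q₊ = Σ_i ℤ≥0 α_i. -/
def QPos (κ : ℕ) : Set (Hw κ) := {x | x.2 = 0 ∧ ∀ i, ∃ n : ℕ, x.1 i = (n : ℚ)}

/-- The set R = WΠ of real roots. -/
def Rset (κ : ℕ) : Set (Hw κ) :=
  {β | ∃ (L : List (ZMod κ)) (i : ZMod κ), β = wordProd κ L (alphaR κ i)}

/-- Positive real roots R₊ = R ∩ Q₊. -/
def Rpos (κ : ℕ) : Set (Hw κ) := Rset κ ∩ QPos κ

/-- Negative real roots R₋ = -R₊. -/
def Rneg (κ : ℕ) : Set (Hw κ) := {β | -β ∈ Rpos κ}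

/-- The inversion set R(w) = R₊ ∩ w R₋. -/
def invSet (κ : ℕ) (w : Hw κ → Hw κ) : Set (Hw κ) := Rpos κ ∩ (w '' Rneg κ)

/-- The weak right Bruhat order on W. -/
def wble (κ : ℕ) (v w : Hw κ → Hw κ) : Prop :=
  Relation.ReflTransGen
    (fun u u' => ∃ i : ZMod κ, u' = u ∘ sFun κ i ∧ len κ u' = len κ u + 1) v w

/-- The weak Bruhat interval [e, w]. -/
def bint (κ : ℕ) (w : Hw κ → Hw κ) : Set (Hw κ → Hw κ) :=
  {x | wble κ id x ∧ wble κ x w}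

/-- A single commutation move on words: swap adjacent letters i, j with i - j ≠ 0, ±1. -/
def CommMove (κ : ℕ) (L1 L2 : List (ZMod κ)) : Prop :=
  ∃ (u v : List (ZMod κ)) (i j : ZMod κ),
    i - j ≠ 0 ∧ i - j ≠ 1 ∧ i - j ≠ -1 ∧
    L1 = u ++ i :: j :: v ∧ L2 = u ++ j :: i :: v

/-- A word is reduced if its length equals the Coxeter length of its product. -/
def IsReducedWord (κ : ℕ) (L : List (ZMod κ)) : Prop :=
  len κ (wordProd κ L) = L.length

/-- Fully commutative: any reduced word for w can be obtained from any other
using only commutation moves. -/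
def FullyComm (κ : ℕ) (w : Hw κ → Hw κ) : Prop :=
  ∀ L1 L2 : List (ZMod κ),
    IsReducedWord κ L1 → wordProd κ L1 = w →
    IsReducedWord κ L2 → wordProd κ L2 = w →
    Relation.ReflTransGen (CommMove κ) L1 L2

/-! ## Hooks, bottom set and weights attached to a cylindric diagram -/

/-- α(x) = α_{con(x)}. -/
def alC (m l : ℕ) (x : Cyl m l) : Hw (m + l) := alphaR (m + l) (con m l x)

/-- arm(x) = {x + π(0,k) : k ≥ 1} ∩ θ. -/
def armSet (m l : ℕ) (θ : Set (Cyl m l)) (x : Cyl m l) : Set (Cyl m l) :=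
  {y | y ∈ θ ∧ ∃ k : ℕ, 1 ≤ k ∧ y = x + pr m l (0, (k : ℤ))}

/-- leg(x) = {x + π(k,0) : k ≥ 1} ∩ θ. -/
def legSet (m l : ℕ) (θ : Set (Cyl m l)) (x : Cyl m l) : Set (Cyl m l) :=
  {y | y ∈ θ ∧ ∃ k : ℕ, 1 ≤ k ∧ y = x + pr m l ((k : ℤ), 0)}

/-- The colored hook length hk(x) = α(x) + Σ_{y∈arm(x)} α(y) + Σ_{y∈leg(x)} α(y). -/
noncomputable def hk (m l : ℕ) (θ : Set (Cyl m l)) (x : Cyl m l) : Hw (m + l) :=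
  alC m l x + (∑ᶠ y ∈ armSet m l θ x, alC m l y) + (∑ᶠ y ∈ legSet m l θ x, alC m l y)

/-- x is the minimum cell b_i of content i in θ. -/
def IsBottomCell (m l : ℕ) (θ : Set (Cyl m l)) (i : ZMod (m + l)) (x : Cyl m l) : Prop :=
  x ∈ θ ∧ con m l x = i ∧ ∀ y ∈ θ, con m l y = i → cle m l x y

/-- The bottom set Γ = {b_i : i ∈ ℤ/κℤ}. -/
def btm (m l : ℕ) (θ : Set (Cyl m l)) : Set (Cyl m l) :=
  {x | ∃ i, IsBottomCell m l θ i x}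

/-- The maximal elements Γ_max of the bottom set. -/
def btmMax (m l : ℕ) (θ : Set (Cyl m l)) : Set (Cyl m l) :=
  {x | x ∈ btm m l θ ∧ ∀ y ∈ btm m l θ, cle m l x y → y = x}

/-- The minimal elements Γ_min of the bottom set. -/
def btmMin (m l : ℕ) (θ : Set (Cyl m l)) : Set (Cyl m l) :=
  {x | x ∈ btm m l θ ∧ ∀ y ∈ btm m l θ, cle m l y x → y = x}

open Classical in
/-- The coefficient a_i of Λ_i in the predominant weight P_θ:
1 if b_i ∈ Γ_max, -1 if b_i ∈ Γ_min, 0 otherwise. -/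
noncomputable def aC (m l : ℕ) (θ : Set (Cyl m l)) (i : ZMod (m + l)) : ℚ :=
  if ∃ x, IsBottomCell m l θ i x ∧ x ∈ btmMax m l θ then 1
  else if ∃ x, IsBottomCell m l θ i x ∧ x ∈ btmMin m l θ then -1 else 0

/-- The pairing ⟨P_θ, β^∨⟩ = Σ_i a_i k_i for β = Σ_i k_i α_i,
where P_θ = Σ_i a_i Λ_i (since ⟨Λ_i, α_j^∨⟩ = δ_{ij} and ⟨Λ_i, d⟩ = 0). -/
noncomputable def pairP (m l : ℕ) (θ : Set (Cyl m l)) (β : Hw (m + l)) : ℚ :=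
  ∑ᶠ i, aC m l θ i * β.1 i

/-- D(P_θ) = {α ∈ R₊ : ⟨P_θ, α^∨⟩ = -1}. -/
def DSet (m l : ℕ) (θ : Set (Cyl m l)) : Set (Hw (m + l)) :=
  {β | β ∈ Rpos (m + l) ∧ pairP m l θ β = -1}

/-- The "inversion set" R(w_θ) = {hk(x) : x ∈ θ}. -/
def RwTheta (m l : ℕ) (θ : Set (Cyl m l)) : Set (Hw (m + l)) := hk m l θ '' θ

/-- The set Π_θ = Π_θ^0 ∪ Π_θ^arm ∪ Π_θ^leg. -/
def PiTheta (m l : ℕ) (θ : Set (Cyl m l)) : Set (Hw (m + l)) :=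
  {v | ∃ x, x ∈ btm m l θ ∧ x ∉ btmMax m l θ ∧ x ∉ btmMin m l θ ∧ v = alC m l x} ∪
  {v | ∃ x, x ∈ btmMax m l θ ∧ v = alC m l x + ∑ᶠ y ∈ armSet m l θ x, alC m l y} ∪
  {v | ∃ x, x ∈ btmMax m l θ ∧ v = alC m l x + ∑ᶠ y ∈ legSet m l θ x, alC m l y}

/-- The modified order ⊴ on R(w_θ): α ⊴ β iff β - α ∈ Σ_{γ∈Π_θ} ℤ≥0 γ. -/
def trile (m l : ℕ) (θ : Set (Cyl m l)) (α β : Hw (m + l)) : Prop :=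
  β - α ∈ AddSubmonoid.closure (PiTheta m l θ)

/-! ## Standard tableaux (encoded by the inverse enumeration e = T⁻¹ : ℤ≥1 → θ) -/

/-- A standard tableau on θ, given by the enumeration e = T⁻¹ : {1,2,…} → θ.
This is precisely the data of an order-preserving bijection T : θ → ℤ≥1. -/
def IsTableau (m l : ℕ) (θ : Set (Cyl m l)) (e : ℕ → Cyl m l) : Prop :=
  Set.InjOn e {a : ℕ | 1 ≤ a} ∧ e '' {a : ℕ | 1 ≤ a} = θ ∧
  ∀ a b : ℕ, 1 ≤ a → 1 ≤ b → cle m l (e a) (e b) → e a ≠ e b → a < b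

/-- A standard tableau on a finite (skew) diagram ξ with |ξ| = n, encoded by
the enumeration e = S⁻¹ : {1,…,n} → ξ. -/
def IsTableauOn (m l : ℕ) (ξ : Set (Cyl m l)) (n : ℕ) (e : ℕ → Cyl m l) : Prop :=
  Set.InjOn e (Set.Icc 1 n) ∧ e '' Set.Icc 1 n = ξ ∧
  ∀ a b : ℕ, a ∈ Set.Icc 1 n → b ∈ Set.Icc 1 n → cle m l (e a) (e b) → e a ≠ e b → a < b

/-- The word (con(e 1), con(e 2), …, con(e n)). -/
def tabWord (m l : ℕ) (e : ℕ → Cyl m l) (n : ℕ) : List (ZMod (m + l)) :=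
  (List.range n).map (fun k => con m l (e (k + 1)))

/-- The semi-infinite Bruhat interval [e, w_{θ,T}) = ⋃_{n≥1} [e, w_{θ,T}[n]]. -/
def semiInt (m l : ℕ) (e : ℕ → Cyl m l) : Set (Hw (m + l) → Hw (m + l)) :=
  ⋃ n ∈ {n : ℕ | 1 ≤ n}, bint (m + l) (wordProd (m + l) (tabWord m l e n))

/-- w is P_θ-pluscule: ⟨P_θ, α^∨⟩ = -1 for every α ∈ R(w). -/
def Pluscule (m l : ℕ) (θ : Set (Cyl m l)) (w : Hw (m + l) → Hw (m + l)) : Prop :=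
  ∀ β ∈ invSet (m + l) w, pairP m l θ β = -1

/-- The generating relation of the heap order ⪯_T on ℤ≥1. -/
def heapRel (m l : ℕ) (e : ℕ → Cyl m l) (a b : ℕ) : Prop :=
  1 ≤ a ∧ a ≤ b ∧
    (con m l (e a) = con m l (e b) ∨
      sFun (m + l) (con m l (e a)) ∘ sFun (m + l) (con m l (e b)) ≠
        sFun (m + l) (con m l (e b)) ∘ sFun (m + l) (con m l (e a)))

/-- The generating relation of the heap order ≤^hp on R(w_θ):
α ≤ β whenever β - α ∈ Q₊ (the ordinary order) and ⟨α, β^∨⟩ ≠ 0. -/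
def hpRel (m l : ℕ) (θ : Set (Cyl m l)) (α β : Hw (m + l)) : Prop :=
  α ∈ RwTheta m l θ ∧ β ∈ RwTheta m l θ ∧ β - α ∈ QPos (m + l) ∧
    pairCo (m + l) α β ≠ 0

/-- v is the Weyl group element w_ξ of a proper order ideal ξ of θ. -/
def IsIdealWord (m l : ℕ) (θ ξ : Set (Cyl m l)) (v : Hw (m + l) → Hw (m + l)) : Prop :=
  IsProperIdealOf m l θ ξ ∧
    ∃ n e, IsTableauOn m l ξ n e ∧ v = wordProd (m + l) (tabWord m l e n)

/-- A proper order ideal of the poset (R(w_θ), ⊴). -/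
def IsProperIdealOfRw (m l : ℕ) (θ : Set (Cyl m l)) (J : Set (Hw (m + l))) : Prop :=
  J ⊆ RwTheta m l θ ∧ J ≠ RwTheta m l θ ∧
    ∀ β ∈ J, ∀ α ∈ RwTheta m l θ, trile m l θ α β → α ∈ J

/-! ### Reflections on level-zero vectors -/

/-- The discrete Laplacian of `g` on the cycle `ℤ/κℤ`; it is `-⟨Σ g_j α_j, α_i^∨⟩`. -/
def lap {κ : ℕ} (g : ZMod κ → ℚ) (i : ZMod κ) : ℚ := g (i - 1) + g (i + 1) - 2 * g i

/-- The action of `s_i` on the coordinates of `Σ g_j α_j`. -/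
def rfl0 {κ : ℕ} (i : ZMod κ) (g : ZMod κ → ℚ) : ZMod κ → ℚ := g + Pi.single i (lap g i)

/-- The action of the product of a word on the coordinates of `Σ g_j α_j`. -/
def act {κ : ℕ} : List (ZMod κ) → (ZMod κ → ℚ) → ZMod κ → ℚ
  | [], g => g
  | i :: L, g => rfl0 i (act L g)

/-- The consecutive differences of `g` around the cycle are `d` or `d - 1`: up to a linear term,
`g` is a lattice path. -/
def Steps {κ : ℕ} (d : ℚ) (g : ZMod κ → ℚ) : Prop :=
  ∀ i, g (i + 1) - g i = d ∨ g (i + 1) - g i = d - 1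

/-- Applied to `f`, the word raises the sum of the coordinates by its length. For a lattice path `f`
a letter raises the sum by at most one, so this means that each letter adds a cell. -/
def Good {κ : ℕ} [NeZero κ] (L : List (ZMod κ)) (f : ZMod κ → ℚ) : Prop :=
  ∑ i, act L f i = ∑ i, f i + L.length

lemma rfl0_self {κ : ℕ} (i : ZMod κ) (g : ZMod κ → ℚ) :
    rfl0 i g i = g (i - 1) + g (i + 1) - g i := by
  simp [rfl0, lap]; ring

lemma rfl0_of_ne {κ : ℕ} {i j : ZMod κ} (h : j ≠ i) (g : ZMod κ → ℚ) : rfl0 i g j = g j := by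
  simp [rfl0, h]

lemma sum_rfl0 {κ : ℕ} [NeZero κ] (i : ZMod κ) (g : ZMod κ → ℚ) :
    ∑ j, rfl0 i g j = ∑ j, g j + lap g i := by
  simp [rfl0, Finset.sum_add_distrib]

lemma pairSimple_eq {κ : ℕ} [NeZero κ] (ζ : Hw κ) (i : ZMod κ) :
    pairSimple κ ζ i = -lap ζ.1 i + ζ.2 * (if i = 0 then 1 else 0) := by
  unfold pairSimple
  congr 1
  rw [finsum_eq_sum_of_fintype]
  have h1 : ∀ j : ZMod κ, i - j = 1 ↔ i - 1 = j := fun j => by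
    constructor <;> intro h
    · rw [← h]; ring
    · rw [← h]; ring
  have h2 : ∀ j : ZMod κ, i - j = -1 ↔ i + 1 = j := fun j => by
    constructor <;> intro h
    · linear_combination h
    · rw [← h]; ring
  simp only [cartan, h1, h2, mul_add, Finset.sum_add_distrib, mul_ite, mul_zero,
    Finset.sum_ite_eq, Finset.mem_univ, if_true, lap]
  ring

lemma sFun_level0 {κ : ℕ} [NeZero κ] (i : ZMod κ) (g : ZMod κ → ℚ) :
    sFun κ i (g, 0) = (rfl0 i g, 0) := by
  unfold sFun alphaR rfl0
  rw [pairSimple_eq]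
  ext j
  · by_cases h : j = i
    · subst h; simp
    · simp [h]
  · simp

lemma wordProd_cons (κ : ℕ) (i : ZMod κ) (L : List (ZMod κ)) :
    wordProd κ (i :: L) = sFun κ i ∘ wordProd κ L := rfl

lemma wordProd_append (κ : ℕ) (L L' : List (ZMod κ)) :
    wordProd κ (L ++ L') = wordProd κ L ∘ wordProd κ L' := by
  induction L with
  | nil => rfl
  | cons i L ih => rw [List.cons_append, wordProd_cons, wordProd_cons, ih]; rfl

lemma wordProd_level0 {κ : ℕ} [NeZero κ] (L : List (ZMod κ)) (g : ZMod κ → ℚ) :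
    wordProd κ L (g, 0) = (act L g, 0) := by
  induction L with
  | nil => rfl
  | cons i L ih => rw [wordProd_cons, Function.comp_apply, ih, sFun_level0]; rfl

lemma rfl0_rfl0 {κ : ℕ} (h1 : (1 : ZMod κ) ≠ 0) (i : ZMod κ) (g : ZMod κ → ℚ) :
    rfl0 i (rfl0 i g) = g := by
  funext j
  by_cases h : j = i
  · subst h
    rw [rfl0_self, rfl0_of_ne (by simpa using h1), rfl0_of_ne (by simpa using h1), rfl0_self]
    ring
  · rw [rfl0_of_ne h, rfl0_of_ne h]

lemma lap_rfl0_self {κ : ℕ} (h1 : (1 : ZMod κ) ≠ 0) (i : ZMod κ) (g : ZMod κ → ℚ) :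
    lap (rfl0 i g) i = -lap g i := by
  unfold lap
  rw [rfl0_self, rfl0_of_ne (by simpa using h1), rfl0_of_ne (by simpa using h1)]
  ring

lemma lap_rfl0_of_far {κ : ℕ} {i j : ZMod κ} (h0 : i - j ≠ 0) (h1 : i - j ≠ 1)
    (h2 : i - j ≠ -1) (g : ZMod κ → ℚ) : lap (rfl0 i g) j = lap g j := by
  unfold lap
  rw [rfl0_of_ne (fun h => h2 (by rw [← h]; ring)), rfl0_of_ne (fun h => h1 (by rw [← h]; ring)),
    rfl0_of_ne (fun h => h0 (by rw [h]; ring))]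

/-! ### Commutation moves -/

lemma pairSimple_sFun_of_far {κ : ℕ} [NeZero κ] {i j : ZMod κ} (h0 : i - j ≠ 0) (h1 : i - j ≠ 1)
    (h2 : i - j ≠ -1) (ζ : Hw κ) : pairSimple κ (sFun κ i ζ) j = pairSimple κ ζ j := by
  have e0 : j ≠ i := fun h => h0 (by rw [h]; ring)
  have e1 : j + 1 ≠ i := fun h => h1 (by rw [← h]; ring)
  have e2 : j - 1 ≠ i := fun h => h2 (by rw [← h]; ring)
  rw [pairSimple_eq, pairSimple_eq]
  simp [sFun, alphaR, lap, e0, e1, e2]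

lemma sFun_comm {κ : ℕ} [NeZero κ] {i j : ZMod κ} (h0 : i - j ≠ 0) (h1 : i - j ≠ 1)
    (h2 : i - j ≠ -1) : sFun κ i ∘ sFun κ j = sFun κ j ∘ sFun κ i := by
  have g0 : j - i ≠ 0 := fun h => h0 (by rw [← neg_sub, h, neg_zero])
  have g1 : j - i ≠ 1 := fun h => h2 (by rw [← neg_sub, h])
  have g2 : j - i ≠ -1 := fun h => h1 (by rw [← neg_sub, h, neg_neg])
  funext ζ
  have a := pairSimple_sFun_of_far h0 h1 h2 ζ
  have b := pairSimple_sFun_of_far g0 g1 g2 ζ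
  have c : sFun κ i (sFun κ j ζ)
      = sFun κ j ζ - pairSimple κ (sFun κ j ζ) i • alphaR κ i := rfl
  have d : sFun κ j (sFun κ i ζ)
      = sFun κ i ζ - pairSimple κ (sFun κ i ζ) j • alphaR κ j := rfl
  simp only [Function.comp_apply]
  rw [c, d, a, b, sFun, sFun]
  abel

lemma CommMove.symm {κ : ℕ} {L L' : List (ZMod κ)} (h : CommMove κ L L') : CommMove κ L' L := by
  obtain ⟨u, v, i, j, h0, h1, h2, e1, e2⟩ := h
  refine ⟨u, v, j, i, fun h => h0 ?_, fun h => h2 ?_, fun h => h1 ?_, e2, e1⟩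
  · rw [← neg_sub, h, neg_zero]
  · rw [← neg_sub, h]
  · rw [← neg_sub, h, neg_neg]

lemma commMoves_symm {κ : ℕ} {L L' : List (ZMod κ)}
    (h : Relation.ReflTransGen (CommMove κ) L L') : Relation.ReflTransGen (CommMove κ) L' L := by
  induction h with
  | refl => exact .refl
  | tail _ hb ih => exact ih.head hb.symm

lemma commMoves_cons {κ : ℕ} (k : ZMod κ) {L L' : List (ZMod κ)}
    (h : Relation.ReflTransGen (CommMove κ) L L') :
    Relation.ReflTransGen (CommMove κ) (k :: L) (k :: L') := by
  refine h.lift (fun M => k :: M) ?_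
  rintro _ _ ⟨u, v, i, j, h0, h1, h2, rfl, rfl⟩
  exact ⟨k :: u, v, i, j, h0, h1, h2, rfl, rfl⟩

lemma commMoves_wordProd {κ : ℕ} [NeZero κ] {L L' : List (ZMod κ)}
    (h : Relation.ReflTransGen (CommMove κ) L L') :
    wordProd κ L = wordProd κ L' ∧ L.length = L'.length := by
  induction h with
  | refl => exact ⟨rfl, rfl⟩
  | tail _ hb ih =>
    obtain ⟨u, v, i, j, h0, h1, h2, rfl, rfl⟩ := hb
    refine ⟨ih.1.trans ?_, ih.2.trans (by simp)⟩
    rw [wordProd_append, wordProd_append, wordProd_cons, wordProd_cons, wordProd_cons,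
      wordProd_cons, ← Function.comp_assoc (sFun κ i), sFun_comm h0 h1 h2, Function.comp_assoc]

lemma act_eq_of_wordProd_eq {κ : ℕ} [NeZero κ] {L L' : List (ZMod κ)}
    (h : wordProd κ L = wordProd κ L') (f : ZMod κ → ℚ) : act L f = act L' f := by
  have := congrFun h (f, 0)
  rw [wordProd_level0, wordProd_level0] at this
  exact congrArg Prod.fst this

/-! ### Words acting on lattice paths -/

/-- A reflection swaps the two steps adjacent to position `i`. -/
lemma Steps.rfl0 {κ : ℕ} (h1 : (1 : ZMod κ) ≠ 0) {d : ℚ} {g : ZMod κ → ℚ} (hg : Steps d g)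
    (i : ZMod κ) : Steps d (rfl0 i g) := by
  intro k
  have hi := hg i
  have hi' := hg (i - 1)
  rw [sub_add_cancel] at hi'
  by_cases hk : k = i
  · subst hk
    rw [rfl0_self, rfl0_of_ne (by simpa using h1)]
    rcases hi' with h | h
    · left; linarith
    · right; linarith
  · by_cases hk' : k + 1 = i
    · obtain rfl : k = i - 1 := by rw [← hk']; ring
      rw [sub_add_cancel, rfl0_self, rfl0_of_ne hk]
      rcases hi with h | h
      · left; linarith
      · right; linarith
    · rw [rfl0_of_ne hk, rfl0_of_ne hk']
      exact hg k

lemma Steps.lap_le {κ : ℕ} {d : ℚ} {g : ZMod κ → ℚ} (hg : Steps d g) (i : ZMod κ) :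
    lap g i ≤ 1 := by
  have hi := hg i
  have hi' := hg (i - 1)
  rw [sub_add_cancel] at hi'
  unfold lap
  rcases hi with h | h <;> rcases hi' with h' | h' <;> linarith

lemma Steps.act {κ : ℕ} (h1 : (1 : ZMod κ) ≠ 0) {d : ℚ} {g : ZMod κ → ℚ} (hg : Steps d g)
    (L : List (ZMod κ)) : Steps d (act L g) := by
  induction L with
  | nil => exact hg
  | cons i L ih => exact ih.rfl0 h1 i

lemma sum_act_le {κ : ℕ} [NeZero κ] (h1 : (1 : ZMod κ) ≠ 0) {d : ℚ} {g : ZMod κ → ℚ}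
    (hg : Steps d g) (L : List (ZMod κ)) : ∑ i, act L g i ≤ ∑ i, g i + L.length := by
  induction L with
  | nil => simp [act]
  | cons i L ih =>
    have := (hg.act h1 L).lap_le i
    rw [act, sum_rfl0, List.length_cons]
    push_cast
    linarith

lemma Good.tail {κ : ℕ} [NeZero κ] (h1 : (1 : ZMod κ) ≠ 0) {d : ℚ} {f : ZMod κ → ℚ}
    (hf : Steps d f) {i : ZMod κ} {L : List (ZMod κ)} (h : Good (i :: L) f) :
    Good L f ∧ lap (act L f) i = 1 := by
  have h3 := (hf.act h1 L).lap_le i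
  have h4 := sum_act_le h1 hf L
  unfold Good at h ⊢
  rw [act, sum_rfl0, List.length_cons] at h
  push_cast at h
  constructor <;> linarith

lemma Good.le_act {κ : ℕ} [NeZero κ] (h1 : (1 : ZMod κ) ≠ 0) {d : ℚ} {f : ZMod κ → ℚ}
    (hf : Steps d f) {L : List (ZMod κ)} (h : Good L f) (j : ZMod κ) : f j ≤ act L f j := by
  induction L with
  | nil => exact le_rfl
  | cons i L ih =>
    obtain ⟨h2, h3⟩ := h.tail h1 hf
    refine (ih h2).trans ?_
    rw [act, CylPaper.rfl0, h3, Pi.add_apply, Pi.single_apply]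
    split_ifs <;> simp

/-- Neighbouring contents are never both corners of a lattice path. -/
lemma Steps.not_corner_succ {κ : ℕ} {d : ℚ} {g : ZMod κ → ℚ} (hg : Steps d g) {i : ZMod κ}
    (h : lap g i = -1) (h' : lap g (i + 1) = -1) : False := by
  have a := hg i
  have b := hg (i - 1)
  have c := hg (i + 1)
  unfold lap at h h'
  rw [sub_add_cancel] at b
  rw [add_sub_cancel_right] at h'
  rcases a with a | a <;> rcases b with b | b <;> rcases c with c | c <;> linarith

/-- If `j` is a corner of the final path that was not yet there at the start, a good word can be
rewritten by commutations so that the letter `j` is applied last. -/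
lemma good_pull {κ : ℕ} [NeZero κ] (h1 : (1 : ZMod κ) ≠ 0) {d : ℚ} {f : ZMod κ → ℚ}
    (hf : Steps d f) {L : List (ZMod κ)} (hL : Good L f) {j : ZMod κ}
    (hj : lap (act L f) j = -1) (hlt : f j < act L f j) :
    ∃ L' : List (ZMod κ), Relation.ReflTransGen (CommMove κ) L (j :: L') := by
  induction L with
  | nil => exact absurd hlt (lt_irrefl _)
  | cons i L ih =>
    by_cases hij : j = i
    · subst hij
      exact ⟨L, .refl⟩
    obtain ⟨hL', hi⟩ := hL.tail h1 hf
    have hS := hf.act h1 (i :: L)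
    have hi' : lap (act (i :: L) f) i = -1 := by rw [act, lap_rfl0_self h1, hi]
    have f0 : i - j ≠ 0 := fun h => hij (sub_eq_zero.mp h).symm
    have f1 : i - j ≠ 1 := fun h => by
      obtain rfl : i = j + 1 := by rw [← h]; ring
      exact hS.not_corner_succ hj hi'
    have f2 : i - j ≠ -1 := fun h => by
      obtain rfl : j = i + 1 := by linear_combination -h
      exact hS.not_corner_succ hi' hj
    rw [act, lap_rfl0_of_far f0 f1 f2] at hj
    rw [act, rfl0_of_ne hij] at hlt
    obtain ⟨L', h⟩ := ih hL' hj hlt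
    exact ⟨i :: L', (commMoves_cons i h).tail ⟨[], L', i, j, f0, f1, f2, rfl, rfl⟩⟩

/-- Good words with the same starting path and the same final path are related by commutations. -/
lemma good_connected {κ : ℕ} [NeZero κ] (h1 : (1 : ZMod κ) ≠ 0) {d : ℚ} {f : ZMod κ → ℚ}
    (hf : Steps d f) {L₁ L₂ : List (ZMod κ)} (hL₁ : Good L₁ f) (hL₂ : Good L₂ f)
    (h : act L₁ f = act L₂ f) : Relation.ReflTransGen (CommMove κ) L₁ L₂ := by
  induction L₁ generalizing L₂ with
  | nil =>
    have h2 : L₂.length = 0 := by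
      unfold Good at hL₂
      rw [← h, act] at hL₂
      have : (L₂.length : ℚ) = 0 := by linarith
      exact_mod_cast this
    rw [List.length_eq_zero_iff.mp h2]
  | cons i L ih =>
    obtain ⟨hL, hi⟩ := hL₁.tail h1 hf
    have hlt : f i < act (i :: L) f i := by
      have := hL.le_act h1 hf i
      rw [act, rfl0, hi]
      simp only [Pi.add_apply, Pi.single_eq_same]
      linarith
    have hc : lap (act (i :: L) f) i = -1 := by rw [act, lap_rfl0_self h1, hi]
    rw [h] at hlt hc
    obtain ⟨L', hpull⟩ := good_pull h1 hf hL₂ hc hlt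
    obtain ⟨hw, hlen⟩ := commMoves_wordProd hpull
    have hact := act_eq_of_wordProd_eq hw f
    have hg : Good (i :: L') f := by
      unfold Good at hL₂ ⊢
      rw [← hact, ← hlen, hL₂]
    have hLL : act L f = act L' f := by
      have : rfl0 i (act L f) = rfl0 i (act L' f) := h.trans hact
      rw [← rfl0_rfl0 h1 i (act L f), this, rfl0_rfl0 h1]
    exact (commMoves_cons i (ih hL (hg.tail h1 hf).1 hLL)).trans (commMoves_symm hpull)

/-! ### Profiles of cylindric diagrams -/

/-- `g` is the profile of `θ`: on the diagonal `b - a = c` the cells of `θ` are those with `a ≤ k`,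
where `k = g c - m c / κ`. The linear term makes the profile periodic. -/
def IsProf (m l : ℕ) (θ : Set (Cyl m l)) (g : ZMod (m + l) → ℚ) : Prop :=
  ∀ c : ℤ, ∃ k : ℤ, g (c : ZMod (m + l)) = k + (m : ℚ) * c / (m + l : ℕ) ∧
    ∀ a : ℤ, pr m l (a, a + c) ∈ θ ↔ a ≤ k

lemma con_pr (m l : ℕ) (p : Z2) : con m l (pr m l p) = ((p.2 - p.1 : ℤ) : ZMod (m + l)) := rfl

lemma pr_om (m l : ℕ) : pr m l (om m l) = 0 :=
  (QuotientAddGroup.eq_zero_iff _).mpr (AddSubgroup.mem_zmultiples _)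

lemma pr_surj (m l : ℕ) (x : Cyl m l) : ∃ p, pr m l p = x :=
  QuotientAddGroup.mk'_surjective _ x

lemma cle_refl (m l : ℕ) (x : Cyl m l) : cle m l x x := by
  obtain ⟨p, hp⟩ := pr_surj m l x
  exact ⟨p, p, hp, hp, le_rfl, le_rfl⟩

lemma pr_shift (m l : ℕ) (a b t : ℤ) : pr m l (a + t * m, b - t * l) = pr m l (a, b) := by
  have : ((a + t * m, b - t * l) : Z2) = (a, b) + t • om m l := by
    ext <;> simp [om]; ring
  rw [this, map_add, map_zsmul, pr_om, smul_zero, add_zero]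

/-- A cell of content `d` has a lift on the diagonal `b - a = d`. -/
lemma exists_lift {m l : ℕ} {x : Cyl m l} {d : ℤ} (h : con m l x = (d : ZMod (m + l))) :
    ∃ a : ℤ, pr m l (a, a + d) = x := by
  obtain ⟨⟨a, b⟩, rfl⟩ := pr_surj m l x
  rw [con_pr, ZMod.intCast_eq_intCast_iff_dvd_sub] at h
  obtain ⟨t, ht⟩ := h
  refine ⟨a - t * m, ?_⟩
  rw [← pr_shift m l a b (-t)]
  congr 2
  · ring
  · push_cast at ht
    linarith

lemma pr_diag_inj {m l : ℕ} (hm : 1 ≤ m) {a b d : ℤ}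
    (h : pr m l (a, a + d) = pr m l (b, b + d)) : a = b := by
  have h2 := QuotientAddGroup.eq.mp h
  obtain ⟨t, ht⟩ := AddSubgroup.mem_zmultiples_iff.mp h2
  have e1 := congrArg Prod.fst ht
  have e2 := congrArg Prod.snd ht
  simp [om] at e1 e2
  have : t * (m + l : ℤ) = 0 := by linarith
  have ht0 : t = 0 := by
    rcases mul_eq_zero.mp this with h | h
    · exact h
    · omega
  subst ht0
  linarith

lemma exists_isProf {m l : ℕ} (hm : 1 ≤ m) {θ : Set (Cyl m l)} (hθ : IsCylindric m l θ) :
    ∃ g, IsProf m l θ g := by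
  obtain ⟨⟨x, hx⟩, hne, hup⟩ := hθ
  obtain ⟨y, hy⟩ := (Set.ne_univ_iff_exists_notMem θ).mp hne
  obtain ⟨⟨a₀, b₀⟩, rfl⟩ := pr_surj m l x
  obtain ⟨⟨a₁, b₁⟩, rfl⟩ := pr_surj m l y
  have key : ∀ c : ℤ, ∃ k : ℤ, ∀ a : ℤ, pr m l (a, a + c) ∈ θ ↔ a ≤ k := by
    intro c
    obtain ⟨k, hk, hmax⟩ := Int.exists_greatest_of_bdd
      (P := fun a => pr m l (a, a + c) ∈ θ)
      ⟨max a₁ (b₁ - c), fun z hz => by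
        by_contra hlt
        push Not at hlt
        have := (max_lt_iff.mp hlt)
        exact hy (hup _ hz _ ⟨_, _, rfl, rfl, by simp only; omega, by simp only; omega⟩)⟩
      ⟨min a₀ (b₀ - c), hup _ hx _ ⟨_, _, rfl, rfl, by simp, by
        have := min_le_right a₀ (b₀ - c)
        simp only; omega⟩⟩
    exact ⟨k, fun a => ⟨hmax a, fun ha =>
      hup _ hk _ ⟨_, _, rfl, rfl, ha, by simpa using ha⟩⟩⟩
  choose F hF using key
  have hper : ∀ c, F (c + (m + l : ℕ)) = F c - m := by
    intro c
    have h : ∀ a : ℤ, a ≤ F (c + (m + l : ℕ)) ↔ a ≤ F c - m := by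
      intro a
      rw [← hF, le_sub_iff_add_le, ← hF, ← pr_shift m l a _ 1]
      have : ((a + 1 * m, a + (c + (m + l : ℕ)) - 1 * l) : Z2) = (a + m, a + m + c) := by
        push_cast
        ext <;> simp
        ring
      rw [this]
    exact le_antisymm ((h _).mp le_rfl) ((h _).mpr le_rfl)
  have hκ : ((m + l : ℕ) : ℚ) ≠ 0 := by
    have : m + l ≠ 0 := by omega
    exact_mod_cast this
  let G : ℤ → ℚ := fun c => F c + (m : ℚ) * c / (m + l : ℕ)
  have hG : Function.Periodic G ((m + l : ℕ) : ℤ) := by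
    intro c
    simp only [G, hper]
    push_cast at hκ ⊢
    field_simp
    ring
  refine ⟨fun z => G (z.cast : ℤ), fun c => ⟨F c, ?_, hF c⟩⟩
  change G _ = G c
  rw [ZMod.coe_intCast, Int.emod_def, mul_comm]
  exact hG.sub_int_mul_eq _

lemma IsProf.unique {m l : ℕ} {θ : Set (Cyl m l)} {f g : ZMod (m + l) → ℚ}
    (hf : IsProf m l θ f) (hg : IsProf m l θ g) : f = g := by
  funext z
  obtain ⟨c, rfl⟩ := ZMod.intCast_surjective z
  obtain ⟨k, hk, h⟩ := hf c
  obtain ⟨k', hk', h'⟩ := hg c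
  have : k = k' := le_antisymm ((h' k).mp ((h k).mpr le_rfl)) ((h k').mp ((h' k').mpr le_rfl))
  rw [hk, hk', this]

lemma IsProf.steps {m l : ℕ} {θ : Set (Cyl m l)} {g : ZMod (m + l) → ℚ} (hg : IsProf m l θ g)
    (hup : ∀ x ∈ θ, ∀ y, cle m l x y → y ∈ θ) : Steps ((m : ℚ) / (m + l : ℕ)) g := by
  intro z
  obtain ⟨c, rfl⟩ := ZMod.intCast_surjective z
  obtain ⟨k, hk, h⟩ := hg c
  obtain ⟨k', hk', h'⟩ := hg (c + 1)
  have a1 : k' ≤ k :=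
    (h k').mp (hup _ ((h' k').mpr le_rfl) _ ⟨_, _, rfl, rfl, le_rfl, by simp⟩)
  have a2 : k - 1 ≤ k' :=
    (h' (k - 1)).mp (hup _ ((h k).mpr le_rfl) _ ⟨_, _, rfl, rfl, by simp, by simp⟩)
  push_cast at hk hk' ⊢
  rw [hk, hk']
  obtain rfl | rfl : k' = k ∨ k' = k - 1 := by omega
  · left; ring
  · right; push_cast; ring

/-- Removing a minimal cell from a diagram applies the corresponding simple reflection to its
profile. -/
lemma IsProf.remove {m l : ℕ} (hm : 1 ≤ m) (h1 : (1 : ZMod (m + l)) ≠ 0) {θ : Set (Cyl m l)}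
    {g : ZMod (m + l) → ℚ} (hg : IsProf m l θ g) (hup : ∀ x ∈ θ, ∀ y, cle m l x y → y ∈ θ)
    {x : Cyl m l} (hx : x ∈ θ) (hmin : ∀ y ∈ θ, cle m l y x → y = x) :
    IsProf m l (θ \ {x}) (rfl0 (con m l x) g) ∧ lap g (con m l x) = -1 := by
  -- On any diagonal through `x`, the cell `x` is the last one of `θ`, and both neighbouring
  -- diagonals stop as early as they can.
  have top : ∀ d k : ℤ, con m l x = (d : ZMod (m + l)) →
      (∀ a : ℤ, pr m l (a, a + d) ∈ θ ↔ a ≤ k) → x = pr m l (k, k + d) := by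
    intro d k hd hk
    obtain ⟨a, ha⟩ := exists_lift hd
    have hak : a ≤ k := (hk a).mp (by rw [ha]; exact hx)
    exact (hmin _ ((hk k).mpr le_rfl) ⟨_, _, rfl, ha, hak, by simpa using hak⟩).symm
  have hlap : lap g (con m l x) = -1 := by
    obtain ⟨c, hc⟩ := ZMod.intCast_surjective (con m l x)
    obtain ⟨k, hk, h⟩ := hg c
    obtain ⟨k', hk', h'⟩ := hg (c + 1)
    obtain ⟨k'', hk'', h''⟩ := hg (c - 1)
    have hxk := top c k hc.symm h
    have a1 : k - 1 ≤ k' :=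
      (h' (k - 1)).mp (hup _ ((h k).mpr le_rfl) _ ⟨_, _, rfl, rfl, by simp, by simp⟩)
    have a2 : k ≤ k'' :=
      (h'' k).mp (hup _ ((h k).mpr le_rfl) _ ⟨_, _, rfl, rfl, by simp, by simp⟩)
    have a3 : k' < k := by
      by_contra hlt
      push Not at hlt
      have := hmin _ ((h' k).mpr hlt) ⟨_, _, rfl, hxk.symm, by simp, by simp⟩
      have := congrArg (con m l) this
      rw [← hc, con_pr] at this
      simp at this
      exact h1 this
    have a4 : k'' < k + 1 := by
      by_contra hlt
      push Not at hlt
      have := hmin _ ((h'' (k + 1)).mpr hlt) ⟨_, _, rfl, hxk.symm, by simp, by simp⟩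
      have := congrArg (con m l) this
      rw [← hc, con_pr] at this
      simp at this
      exact h1 this
    obtain rfl : k' = k - 1 := by omega
    obtain rfl : k'' = k := by omega
    push_cast at hk hk' hk''
    rw [← hc, lap, hk, hk', hk'']
    ring
  refine ⟨fun d => ?_, hlap⟩
  obtain ⟨k, hk, h⟩ := hg d
  by_cases hd : con m l x = (d : ZMod (m + l))
  · have hxk := top d k hd h
    refine ⟨k - 1, ?_, fun a => ?_⟩
    · rw [rfl0, hlap, hd, Pi.add_apply, Pi.single_eq_same, hk]
      push_cast
      ring
    · rw [Set.mem_sdiff, h, Set.mem_singleton_iff]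
      constructor
      · rintro ⟨h2, h3⟩
        have : a ≠ k := fun e => h3 (by rw [hxk, e])
        omega
      · intro h2
        refine ⟨by omega, fun h3 => ?_⟩
        have := pr_diag_inj hm (h3.trans hxk)
        omega
  · refine ⟨k, by rw [rfl0_of_ne (Ne.symm hd), hk], fun a => ?_⟩
    rw [Set.mem_sdiff, h, Set.mem_singleton_iff, and_iff_left]
    intro h3
    apply hd
    rw [← h3, con_pr]
    simp

/-- For a list of cells enumerating an order ideal of `θ` compatibly with the order, the word of
contents is good and takes the profile of the complement to that of `θ`. -/
lemma tableau_word {m l : ℕ} (hm : 1 ≤ m) (h1 : (1 : ZMod (m + l)) ≠ 0) [NeZero (m + l)]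
    (xs : List (Cyl m l)) (θ : Set (Cyl m l)) (g : ZMod (m + l) → ℚ) (hg : IsProf m l θ g)
    (hup : ∀ x ∈ θ, ∀ y, cle m l x y → y ∈ θ)
    (hord : xs.Pairwise (fun x y => ¬ cle m l y x)) (hsub : ∀ x ∈ xs, x ∈ θ)
    (hideal : ∀ x ∈ xs, ∀ y ∈ θ, cle m l y x → y ∈ xs) :
    ∃ f, IsProf m l (θ \ {x | x ∈ xs}) f ∧ act (xs.map (con m l)) f = g ∧
      Good (xs.map (con m l)) f := by
  induction xs generalizing θ g with
  | nil => exact ⟨g, by simpa using hg, rfl, by simp [Good, act]⟩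
  | cons x xs ih =>
    obtain ⟨hx, hord'⟩ := List.pairwise_cons.mp hord
    have hxθ : x ∈ θ := hsub x (by simp)
    have hmin : ∀ y ∈ θ, cle m l y x → y = x := by
      intro y hy hyx
      rcases List.mem_cons.mp (hideal x (by simp) y hy hyx) with h | h
      · exact h
      · exact absurd hyx (hx y h)
    obtain ⟨hp, hlap⟩ := hg.remove hm h1 hup hxθ hmin
    obtain ⟨f, hf, hact, hgood⟩ := ih (θ \ {x}) _ hp
      (fun z hz y hzy => ⟨hup z hz.1 y hzy, fun hyx => hz.2 (by
        rw [Set.mem_singleton_iff] at hyx ⊢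
        subst hyx
        exact hmin z hz.1 hzy)⟩)
      hord'
      (fun z hz => ⟨hsub z (by simp [hz]), fun hzx => hx z hz (by
        rw [Set.mem_singleton_iff.mp hzx]
        exact cle_refl m l x)⟩)
      (fun z hz y hy hyz => (List.mem_cons.mp (hideal z (by simp [hz]) y hy.1 hyz)).resolve_left
        (by simpa using hy.2))
    refine ⟨f, ?_, ?_, ?_⟩
    · have : θ \ {y | y ∈ x :: xs} = (θ \ {x}) \ {y | y ∈ xs} := by
        ext y
        simp
        tauto
      rw [this]
      exact hf
    · rw [List.map_cons, act, hact, rfl0_rfl0 h1]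
    · unfold Good at hgood ⊢
      rw [List.map_cons, act, sum_rfl0, List.length_cons, hgood, hact, lap_rfl0_self h1, hlap]
      push_cast
      ring

/-- The form of `tableau_word` for standard tableaux given by an enumeration. -/
lemma tabWord_good {m l : ℕ} (hm : 1 ≤ m) (h1 : (1 : ZMod (m + l)) ≠ 0) [NeZero (m + l)]
    {θ ξ : Set (Cyl m l)} {n : ℕ} {e : ℕ → Cyl m l} {g : ZMod (m + l) → ℚ}
    (hg : IsProf m l θ g) (hup : ∀ x ∈ θ, ∀ y, cle m l x y → y ∈ θ)
    (hξ : IsProperIdealOf m l θ ξ) (he : IsTableauOn m l ξ n e) :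
    ∃ f, IsProf m l (θ \ ξ) f ∧ act (tabWord m l e n) f = g ∧ Good (tabWord m l e n) f := by
  obtain ⟨hinj, himg, hmono⟩ := he
  have hset : ∀ x, x ∈ (List.range n).map (fun k => e (k + 1)) ↔ x ∈ ξ := by
    intro x
    rw [← himg]
    simp only [List.mem_map, List.mem_range, Set.mem_image, Set.mem_Icc]
    constructor
    · rintro ⟨k, hk, rfl⟩
      exact ⟨k + 1, by omega, rfl⟩
    · rintro ⟨k, hk, rfl⟩
      exact ⟨k - 1, by omega, by congr 1; omega⟩
  have hw : tabWord m l e n = ((List.range n).map (fun k => e (k + 1))).map (con m l) := by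
    simp [tabWord]
  obtain ⟨f, h⟩ := tableau_word hm h1 ((List.range n).map (fun k => e (k + 1))) θ g hg hup
    (by
      rw [List.pairwise_map]
      refine List.Pairwise.imp_of_mem ?_ (List.pairwise_lt_range (n := n))
      intro a b ha hb hab hle
      rw [List.mem_range] at ha hb
      have ha' : a + 1 ∈ Set.Icc 1 n := ⟨by omega, by omega⟩
      have hb' : b + 1 ∈ Set.Icc 1 n := ⟨by omega, by omega⟩
      have := hmono _ _ hb' ha' hle (fun h => by
        have := hinj hb' ha' h
        omega)
      omega)
    (fun x hx => hξ.1 ((hset x).mp hx))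
    (fun x hx y hy hyx => (hset y).mpr (hξ.2.2 x ((hset x).mp hx) y hy hyx))
  refine ⟨f, ?_⟩
  rw [hw]
  simpa only [hset, Set.ofPred_mem_eq] using h


/-- Proposition 4.1: for ξ ∈ I_n(θ) and a standard tableau S on ξ, the word
w_{ξ,S} is reduced, fully commutative, and (as an element of W) independent of S. -/
theorem statement_14 (m l : ℕ) (hm : 1 ≤ m) (hl : 1 ≤ l)
    (θ : Set (Cyl m l)) (hθ : IsCylindric m l θ)
    (ξ : Set (Cyl m l)) (n : ℕ) (hξ : IsProperIdealOf m l θ ξ) (hcard : ξ.ncard = n)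
    (e : ℕ → Cyl m l) (he : IsTableauOn m l ξ n e) :
    len (m + l) (wordProd (m + l) (tabWord m l e n)) = n ∧
    FullyComm (m + l) (wordProd (m + l) (tabWord m l e n)) ∧
    ∀ e' : ℕ → Cyl m l, IsTableauOn m l ξ n e' →
      wordProd (m + l) (tabWord m l e' n) = wordProd (m + l) (tabWord m l e n) := by
  have : NeZero (m + l) := ⟨by omega⟩
  have : Fact (1 < m + l) := ⟨by omega⟩
  have h1 : (1 : ZMod (m + l)) ≠ 0 := one_ne_zero
  obtain ⟨g, hg⟩ := exists_isProf hm hθ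
  have hup := hθ.2.2
  obtain ⟨f, hf, hact, hgood⟩ := tabWord_good hm h1 hg hup hξ he
  have hS : Steps ((m : ℚ) / (m + l : ℕ)) f := hf.steps (by
    rintro x ⟨hx, hxξ⟩ y hxy
    exact ⟨hup x hx y hxy, fun hy => hxξ (hξ.2.2 y hy x hx hxy)⟩)
  have hlw : (tabWord m l e n).length = n := by simp [tabWord]
  have hsum : ∑ i, g i = ∑ i, f i + (n : ℚ) := by
    rw [← hact, hgood, hlw]
  have hlen : len (m + l) (wordProd (m + l) (tabWord m l e n)) = n := by
    refine le_antisymm (Nat.sInf_le ⟨_, hlw, rfl⟩) (le_csInf ⟨n, _, hlw, rfl⟩ ?_)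
    rintro r ⟨L, rfl, hL⟩
    have := sum_act_le h1 hS L
    rw [act_eq_of_wordProd_eq hL f, hact, hsum] at this
    have : (n : ℚ) ≤ L.length := by linarith
    exact_mod_cast this
  refine ⟨hlen, ?_, ?_⟩
  · have hred : ∀ L : List (ZMod (m + l)), IsReducedWord (m + l) L →
        wordProd (m + l) L = wordProd (m + l) (tabWord m l e n) →
        act L f = g ∧ Good L f := by
      intro L hr hL
      have ha : act L f = g := (act_eq_of_wordProd_eq hL f).trans hact
      refine ⟨ha, ?_⟩
      unfold IsReducedWord at hr
      rw [Good, ha, ← hr, hL, hlen, hsum]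
    intro L₁ L₂ r₁ w₁ r₂ w₂
    obtain ⟨a₁, g₁⟩ := hred L₁ r₁ w₁
    obtain ⟨a₂, g₂⟩ := hred L₂ r₂ w₂
    exact good_connected h1 hS g₁ g₂ (a₁.trans a₂.symm)
  · intro e' he'
    obtain ⟨f', hf', hact', hgood'⟩ := tabWord_good hm h1 hg hup hξ he'
    obtain rfl := hf'.unique hf
    exact (commMoves_wordProd (good_connected h1 hS hgood' hgood (hact'.trans hact.symm))).1

end CylPaper
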